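/- Suppose a group G acts geometrically on a CAT(0) space X with fixed basepoint x₀, |∂X| > 2, and X is hyperbolic. Then the boundary ∂X is a scrambled set; moreover, there exists a constant c > 0, independent of the pair of boundary points, such that limsup{ d_{∂X}(gα, gβ) : g ∈ G } > c for all α, β ∈ ∂X with α ≠ β. -/

import Mathlib

/-!
The proof moves the basepoint along a geodesic ray and uses cocompactness to bring it back.

For a CAT(0) space, comparison triangles give two convexity facts: rays issuing from a common point
satisfy `d(ξ s, ζ s) ≤ (s / t) d(ξ t, ζ t)` for `s ≤ t` (`CAT0.ray_conv`), and asymptotic rays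
satisfy `d(ξ t, ζ t) ≤ d(ξ 0, ζ 0)` (`CAT0.asymp_le`). Hyperbolicity enters only through
`key_near`: if `α ≠ γ`, every ray towards `α` issuing from a point of the ray from `x₀` to `γ`
passes within a uniform distance `K` of `x₀`.

* Separation. Let `y` be the point at distance `n` on the ray from `x₀` to `α`. The ray from `y` to
  `β` comes back near `x₀` at time `n`, so by convexity its beginning backtracks along `[y, x₀]`,
  while the ray from `y` to `α` runs in the opposite direction. At a fixed time `i` the two are
  at distance at least `2 i - 1` once `n` is large. An element `g` with `d(g y, x₀) ≤ R` then
  separates `g α` and `g β`, as seen from `x₀`, by at least `2 i - 1 - 2 R` at time `i`; the choice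
  of `i` depends on `R` only.
* Proximality. Let `γ` be a third boundary point and `y` the point at distance `n` on the ray from
  `x₀` to `γ`. The rays from `y` to `α` and to `β` are both close to `x₀` at time `n`, so they are
  at bounded distance from each other at time `n`; after translating by `g` as above, convexity
  makes the rays from `x₀` to `g α` and `g β` arbitrarily close on any prescribed initial segment.

In both cases the elements `g` are infinitely many, because `y` escapes to infinity
(`frequently_of_ray`).
-/

/-- `γ` parametrizes a geodesic segment from `x` to `y` by arc length:
it is an isometric embedding of `[0, dist x y]` with `γ 0 = x` and `γ (dist x y) = y`. -/
def IsGeodesicFrom {X : Type*} [MetricSpace X] (γ : ℝ → X) (x y : X) : Prop :=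
  γ 0 = x ∧ γ (dist x y) = y ∧
    ∀ s ∈ Set.Icc (0 : ℝ) (dist x y), ∀ t ∈ Set.Icc (0 : ℝ) (dist x y),
      dist (γ s) (γ t) = |s - t|

/-- A geodesic space: every pair of points is joined by a geodesic. -/
def GeodesicSpace (X : Type*) [MetricSpace X] : Prop :=
  ∀ x y : X, ∃ γ : ℝ → X, IsGeodesicFrom γ x y

/-- The comparison point in the Euclidean plane: the point at arc-length parameter `s`
on the segment from `p` to `q`, where `D` is the length of that segment. -/
noncomputable def cmpPt (p q : EuclideanSpace ℝ (Fin 2)) (D s : ℝ) :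
    EuclideanSpace ℝ (Fin 2) :=
  p + (s / D) • (q - p)

/-- A CAT(0) space: a geodesic space in which every geodesic triangle satisfies the
CAT(0) comparison inequality with respect to a comparison triangle in the Euclidean
plane `ℝ²` with the same side lengths. -/
def CAT0 (X : Type*) [MetricSpace X] : Prop :=
  GeodesicSpace X ∧
    ∀ (p q r : X) (γ γ' : ℝ → X), IsGeodesicFrom γ p q → IsGeodesicFrom γ' p r →
      ∀ pc qc rc : EuclideanSpace ℝ (Fin 2),
        dist pc qc = dist p q → dist pc rc = dist p r → dist qc rc = dist q r →
        ∀ s ∈ Set.Icc (0 : ℝ) (dist p q), ∀ t ∈ Set.Icc (0 : ℝ) (dist p r),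
          dist (γ s) (γ' t) ≤ dist (cmpPt pc qc (dist p q) s) (cmpPt pc rc (dist p r) t)

/-- A geodesic ray: an isometric embedding of `[0, ∞)`. -/
def IsGeodesicRay {X : Type*} [MetricSpace X] (ξ : ℝ → X) : Prop :=
  ∀ s ∈ Set.Ici (0 : ℝ), ∀ t ∈ Set.Ici (0 : ℝ), dist (ξ s) (ξ t) = |s - t|

/-- Two rays are asymptotic if they are at bounded distance from each other. -/
def Asymptotic {X : Type*} [MetricSpace X] (ξ ζ : ℝ → X) : Prop :=
  ∃ C : ℝ, ∀ t ≥ (0 : ℝ), dist (ξ t) (ζ t) ≤ C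

/-- The action of `G` on `X` is by isometries. -/
def IsometricAction (G X : Type*) [Group G] [MetricSpace X] [MulAction G X] : Prop :=
  ∀ (g : G) (x y : X), dist (g • x) (g • y) = dist x y

/-- The action of `G` on `X` is (metrically) proper. -/
def ProperAction (G X : Type*) [Group G] [MetricSpace X] [MulAction G X] : Prop :=
  ∀ (x : X) (R : ℝ), {g : G | dist x (g • x) ≤ R}.Finite

/-- The action of `G` on `X` is cocompact: some (hence any) orbit is coarsely dense. -/
def CocompactAction (G X : Type*) [Group G] [MetricSpace X] [MulAction G X] : Prop :=
  ∀ x : X, ∃ R > (0 : ℝ), ∀ y : X, ∃ g : G, dist y (g • x) ≤ R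

/-- A geometric action: proper and cocompact, by isometries. -/
def GeometricAction (G X : Type*) [Group G] [MetricSpace X] [MulAction G X] : Prop :=
  IsometricAction G X ∧ ProperAction G X ∧ CocompactAction G X

/-- A bundled presentation of the boundary `∂X` of a proper CAT(0) space `X`,
together with the induced action of `G`.  The type `Bd` plays the role of `∂X`:
`ray x α` is the unique geodesic ray issuing from `x` in the asymptotic class `α`,
every geodesic ray is asymptotic to exactly one such ray, and the `G`-action on `Bd`
is the one induced by the action on rays, `g • [ξ] = [g ∘ ξ]`. -/
structure BoundaryStruct (G X Bd : Type*) [Group G] [MetricSpace X]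
    [MulAction G X] [MulAction G Bd] where
  ray : X → Bd → ℝ → X
  isRay : ∀ (x : X) (α : Bd), IsGeodesicRay (ray x α)
  ray_start : ∀ (x : X) (α : Bd), ray x α 0 = x
  ray_asymp : ∀ (x y : X) (α : Bd), Asymptotic (ray x α) (ray y α)
  ray_inj : ∀ (x : X) (α β : Bd), Asymptotic (ray x α) (ray x β) → α = β
  ray_surj : ∀ ξ : ℝ → X, IsGeodesicRay ξ → ∃ α : Bd, Asymptotic ξ (ray (ξ 0) α)
  equivariant : ∀ (g : G) (x : X) (α : Bd) (t : ℝ), g • ray x α t = ray (g • x) (g • α) t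

/-- The metric `d_{∂X}` on the boundary with respect to the basepoint `x₀`:
`d_{∂X}(α,β) = Σ_{i=1}^∞ min { d(ξ_{x₀,α}(i), ξ_{x₀,β}(i)), 2⁻ⁱ }`. -/
noncomputable def bdist {G X Bd : Type*} [Group G] [MetricSpace X]
    [MulAction G X] [MulAction G Bd] (B : BoundaryStruct G X Bd) (x₀ : X)
    (α β : Bd) : ℝ :=
  ∑' i : ℕ, min (dist (B.ray x₀ α (i + 1)) (B.ray x₀ β (i + 1))) ((1 : ℝ) / 2 ^ (i + 1))

/-- The boundary is a scrambled set: for all distinct `α, β ∈ ∂X`,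
`limsup { d_{∂X}(gα, gβ) : g ∈ G } > 0` and `liminf { d_{∂X}(gα, gβ) : g ∈ G } = 0`
(limit superior/inferior being taken along the cofinite filter on `G`). -/
def IsScrambled {G X Bd : Type*} [Group G] [MetricSpace X]
    [MulAction G X] [MulAction G Bd] (B : BoundaryStruct G X Bd) (x₀ : X) : Prop :=
  ∀ α β : Bd, α ≠ β →
    0 < Filter.limsup (fun g : G => bdist B x₀ (g • α) (g • β)) Filter.cofinite ∧
    Filter.liminf (fun g : G => bdist B x₀ (g • α) (g • β)) Filter.cofinite = 0

/-- The boundary has more than two points. -/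
def MoreThanTwo (Bd : Type*) : Prop :=
  ∃ a b c : Bd, a ≠ b ∧ a ≠ c ∧ b ≠ c

/-- A geodesic space is hyperbolic if there is `δ > 0` such that every geodesic triangle
is `δ`-slim: each side is contained in the `δ`-neighbourhood of the union of the other
two sides. -/
def HyperbolicSpace (X : Type*) [MetricSpace X] : Prop :=
  ∃ δ > (0 : ℝ), ∀ (p q r : X) (γ₁ γ₂ γ₃ : ℝ → X),
    IsGeodesicFrom γ₁ p q → IsGeodesicFrom γ₂ q r → IsGeodesicFrom γ₃ p r →
    ∀ s ∈ Set.Icc (0 : ℝ) (dist p q),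
      ∃ u ∈ γ₂ '' Set.Icc (0 : ℝ) (dist q r) ∪ γ₃ '' Set.Icc (0 : ℝ) (dist p r),
        dist (γ₁ s) u ≤ δ

/-! ### Comparison triangles and convexity in CAT(0) spaces -/

theorem exists_cmp_triangle (a b c : ℝ) (ha : 0 ≤ a) (hb : 0 ≤ b) (hc : 0 ≤ c)
    (h1 : a ≤ b + c) (h2 : b ≤ a + c) (h3 : c ≤ a + b) :
    ∃ p q r : EuclideanSpace ℝ (Fin 2), dist p q = a ∧ dist p r = b ∧ dist q r = c := by
  rcases ha.eq_or_lt with h0 | h0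
  · subst h0
    have hbc : b = c := by linarith
    refine ⟨!₂[0, 0], !₂[0, 0], !₂[b, 0], ?_, ?_, ?_⟩
    · simp
    · simp [EuclideanSpace.dist_eq, Real.dist_eq, Real.sqrt_sq_eq_abs, abs_of_nonneg hb]
    · simp [EuclideanSpace.dist_eq, Real.dist_eq, hbc, hc]
  · -- the law of cosines gives the first coordinate of `r`
    set u := (a ^ 2 + b ^ 2 - c ^ 2) / (2 * a) with hu
    have hau : 2 * a * u = a ^ 2 + b ^ 2 - c ^ 2 := by rw [hu]; field_simp
    have hub : u ^ 2 ≤ b ^ 2 := by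
      apply sq_le_sq'
      · have : 0 ≤ 2 * a * (u + b) := by nlinarith
        have := nonneg_of_mul_nonneg_right this (by positivity)
        linarith
      · have : 0 ≤ 2 * a * (b - u) := by nlinarith
        have := nonneg_of_mul_nonneg_right this (by positivity)
        linarith
    have hv : Real.sqrt (b ^ 2 - u ^ 2) ^ 2 = b ^ 2 - u ^ 2 := Real.sq_sqrt (by linarith)
    refine ⟨!₂[0, 0], !₂[a, 0], !₂[u, Real.sqrt (b ^ 2 - u ^ 2)], ?_, ?_, ?_⟩
    · simp [EuclideanSpace.dist_eq, Real.dist_eq, Real.sqrt_sq_eq_abs, abs_of_nonneg ha]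
    · simp only [EuclideanSpace.dist_eq, Real.dist_eq, sq_abs, Fin.sum_univ_two]
      rw [Real.sqrt_eq_iff_mul_self_eq (by positivity) hb]
      simp
      nlinarith
    · simp only [EuclideanSpace.dist_eq, Real.dist_eq, sq_abs, Fin.sum_univ_two]
      rw [Real.sqrt_eq_iff_mul_self_eq (by positivity) hc]
      simp
      nlinarith

/-- Convexity of the metric, in the form of comparison at proportional parameters on two geodesics
with a common origin. -/
theorem CAT0.conv {X : Type*} [MetricSpace X] (h : CAT0 X) {p q r : X} {γ γ' : ℝ → X}
    (hγ : IsGeodesicFrom γ p q) (hγ' : IsGeodesicFrom γ' p r) {l : ℝ} (h0 : 0 ≤ l) (h1 : l ≤ 1) :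
    dist (γ (l * dist p q)) (γ' (l * dist p r)) ≤ l * dist q r := by
  obtain ⟨pc, qc, rc, e1, e2, e3⟩ := exists_cmp_triangle (dist p q) (dist p r) (dist q r)
    dist_nonneg dist_nonneg dist_nonneg
    (by simpa only [dist_comm r q] using dist_triangle p r q) (dist_triangle p q r)
    (by simpa only [dist_comm q p] using dist_triangle q p r)
  have key : ∀ w : EuclideanSpace ℝ (Fin 2), ∀ D : ℝ, dist pc w = D →
      cmpPt pc w D (l * D) = pc + l • (w - pc) := by
    intro w D hD
    unfold cmpPt
    by_cases hz : D = 0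
    · have : pc = w := dist_eq_zero.1 (hD.trans hz)
      simp [this]
    · rw [mul_div_assoc, div_self hz, mul_one]
  have := h.2 p q r γ γ' hγ hγ' pc qc rc e1 e2 e3 (l * dist p q)
    ⟨by positivity, mul_le_of_le_one_left dist_nonneg h1⟩ (l * dist p r)
    ⟨by positivity, mul_le_of_le_one_left dist_nonneg h1⟩
  rw [key _ _ e1, key _ _ e2, dist_add_left, dist_smul₀, dist_sub_right, e3, Real.norm_eq_abs,
    abs_of_nonneg h0] at this
  exact this

theorem IsGeodesicFrom.rev {X : Type*} [MetricSpace X] {γ : ℝ → X} {x y : X}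
    (h : IsGeodesicFrom γ x y) : IsGeodesicFrom (fun t => γ (dist x y - t)) y x := by
  obtain ⟨h0, h1, h2⟩ := h
  refine ⟨by simpa using h1, by simpa [dist_comm y x] using h0, ?_⟩
  intro s hs t ht
  rw [dist_comm y x] at hs ht
  rw [h2 _ ⟨by linarith [hs.2], by linarith [hs.1]⟩ _ ⟨by linarith [ht.2], by linarith [ht.1]⟩,
    abs_sub_comm]
  congr 1
  ring

theorem IsGeodesicRay.dist_zero {X : Type*} [MetricSpace X] {ξ : ℝ → X} (h : IsGeodesicRay ξ)
    {T : ℝ} (hT : 0 ≤ T) : dist (ξ 0) (ξ T) = T := by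
  rw [h 0 (by simp) T hT, zero_sub, abs_neg, abs_of_nonneg hT]

theorem IsGeodesicRay.seg {X : Type*} [MetricSpace X] {ξ : ℝ → X} (h : IsGeodesicRay ξ)
    {T : ℝ} (hT : 0 ≤ T) : IsGeodesicFrom ξ (ξ 0) (ξ T) := by
  refine ⟨rfl, by rw [h.dist_zero hT], ?_⟩
  intro s hs t ht
  exact h s hs.1 t ht.1

theorem IsGeodesicRay.shift {X : Type*} [MetricSpace X] {ξ : ℝ → X} (h : IsGeodesicRay ξ)
    {n : ℝ} (hn : 0 ≤ n) : IsGeodesicRay (fun t => ξ (n + t)) := by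
  intro s hs t ht
  simp only [Set.mem_Ici] at hs ht
  rw [h _ (by simp only [Set.mem_Ici]; linarith) _ (by simp only [Set.mem_Ici]; linarith)]
  congr 1
  ring

theorem CAT0.ray_conv {X : Type*} [MetricSpace X] (h : CAT0 X) {ξ ζ : ℝ → X}
    (hξ : IsGeodesicRay ξ) (hζ : IsGeodesicRay ζ) (h0 : ξ 0 = ζ 0) {s t : ℝ} (hs : 0 ≤ s)
    (hst : s ≤ t) (ht : 0 < t) : dist (ξ s) (ζ s) ≤ s / t * dist (ξ t) (ζ t) := by
  have h1 := hξ.seg ht.le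
  have h2 := hζ.seg ht.le
  rw [← h0] at h2
  have := h.conv h1 h2 (l := s / t) (by positivity) ((div_le_one ht).2 hst)
  rw [hξ.dist_zero ht.le, h0, hζ.dist_zero ht.le, div_mul_cancel₀ _ ht.ne'] at this
  exact this

/-- Asymptotic rays get no farther apart than their starting points: compare both with the
geodesic from `ξ 0` to `ζ T` and let `T` tend to infinity. -/
theorem CAT0.asymp_le {X : Type*} [MetricSpace X] (h : CAT0 X) {ξ ζ : ℝ → X}
    (hξ : IsGeodesicRay ξ) (hζ : IsGeodesicRay ζ) (ha : Asymptotic ξ ζ) {t : ℝ} (ht : 0 ≤ t) :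
    dist (ξ t) (ζ t) ≤ dist (ξ 0) (ζ 0) := by
  obtain ⟨C, hC⟩ := ha
  have hC0 : 0 ≤ C := dist_nonneg.trans (hC 0 le_rfl)
  have main : ∀ T : ℝ, 0 < T → t ≤ T →
      dist (ξ t) (ζ t) ≤ t / T * C + dist (ξ 0) (ζ 0) := by
    intro T hT htT
    obtain ⟨σ, hσ⟩ := h.1 (ξ 0) (ζ T)
    have hl0 : 0 ≤ t / T := by positivity
    have hl1 : t / T ≤ 1 := (div_le_one hT).2 htT
    have a1 := h.conv (hξ.seg hT.le) hσ hl0 hl1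
    rw [hξ.dist_zero hT.le, div_mul_cancel₀ _ hT.ne'] at a1
    have a2 := h.conv hσ.rev (hζ.seg hT.le).rev (l := 1 - t / T) (by linarith) (by linarith)
    simp only [dist_comm (ζ T) _, hζ.dist_zero hT.le] at a2
    have e1 : dist (ξ 0) (ζ T) - (1 - t / T) * dist (ξ 0) (ζ T) = t / T * dist (ξ 0) (ζ T) := by
      ring
    have e2 : T - (1 - t / T) * T = t := by field_simp; ring
    rw [e1, e2] at a2
    have a3 : t / T * dist (ξ T) (ζ T) ≤ t / T * C :=
      mul_le_mul_of_nonneg_left (hC T hT.le) hl0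
    have a4 : (1 - t / T) * dist (ξ 0) (ζ 0) ≤ dist (ξ 0) (ζ 0) :=
      mul_le_of_le_one_left dist_nonneg (by linarith)
    linarith [dist_triangle (ξ t) (σ (t / T * dist (ξ 0) (ζ T))) (ζ t)]
  refine le_of_forall_pos_le_add fun ε hε => ?_
  have hT : 0 < t + 1 + t * C / ε := by positivity
  refine (main _ hT (by linarith [show 0 ≤ t * C / ε by positivity])).trans ?_
  have : t / (t + 1 + t * C / ε) * C ≤ ε := by
    rw [div_mul_eq_mul_div, div_le_iff₀ hT]
    have : ε * (t * C / ε) = t * C := by field_simp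
    nlinarith
  linarith

/-! ### Rays towards distinct boundary points -/

section

variable {G X Bd : Type*} [Group G] [MetricSpace X] [MulAction G X] [MulAction G Bd]

/-- The start of a ray may be moved at the cost of the distance of the two starting points. -/
theorem BoundaryStruct.change_base (B : BoundaryStruct G X Bd) (hCAT : CAT0 X) (x y : X) (α : Bd)
    {t : ℝ} (ht : 0 ≤ t) : dist (B.ray x α t) (B.ray y α t) ≤ dist x y := by
  have := hCAT.asymp_le (B.isRay x α) (B.isRay y α) (B.ray_asymp x y α) ht
  rwa [B.ray_start, B.ray_start] at this

theorem BoundaryStruct.dist_start (B : BoundaryStruct G X Bd) (x : X) (α : Bd)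
    {t : ℝ} (ht : 0 ≤ t) : dist x (B.ray x α t) = t := by
  have := (B.isRay x α).dist_zero ht
  rwa [B.ray_start] at this

/-- The ray towards `α` issuing from a point of a ray towards `α` is the tail of the latter. -/
theorem BoundaryStruct.ray_tail (B : BoundaryStruct G X Bd) (hCAT : CAT0 X) (x : X) (α : Bd)
    {n t : ℝ} (hn : 0 ≤ n) (ht : 0 ≤ t) :
    B.ray (B.ray x α n) α t = B.ray x α (n + t) := by
  have ha : Asymptotic (B.ray (B.ray x α n) α) (fun t => B.ray x α (n + t)) := by
    refine ⟨n + n, fun s hs => ?_⟩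
    have h1 := B.change_base hCAT (B.ray x α n) x α hs
    have h2 := B.isRay x α s hs (n + s) (by simp only [Set.mem_Ici]; linarith)
    rw [dist_comm _ x, B.dist_start x α hn] at h1
    rw [show s - (n + s) = -n by ring, abs_neg, abs_of_nonneg hn] at h2
    exact (dist_triangle _ _ _).trans (add_le_add h1 h2.le)
  have := hCAT.asymp_le (B.isRay _ α) ((B.isRay x α).shift hn) ha ht
  rw [B.ray_start, add_zero, dist_self] at this
  exact dist_le_zero.1 this

/-- Visibility from `x₀`: rays towards `α` issuing from points of the ray from `x₀` to `γ ≠ α` pass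
uniformly close to `x₀`. Slimness of the triangle `x₀`, `y = ray x₀ γ n`, `ray x₀ α m`, applied at a
point where the two sides at `x₀` have diverged by more than `2 δ`, gives a point of the third side
near `x₀`; for large `m` that side is close to the ray from `y` to `α`. -/
theorem BoundaryStruct.key_near (B : BoundaryStruct G X Bd) (hCAT : CAT0 X)
    (hhyp : HyperbolicSpace X) (x₀ : X) {α γ : Bd} (hne : α ≠ γ) :
    ∃ K : ℝ, 0 ≤ K ∧ ∀ n : ℝ, 0 ≤ n → dist (B.ray (B.ray x₀ γ n) α n) x₀ ≤ K := by
  obtain ⟨δ, hδ, hslim⟩ := hhyp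
  have hdiv : ∃ t0 : ℝ, 0 ≤ t0 ∧ 2 * δ < dist (B.ray x₀ γ t0) (B.ray x₀ α t0) := by
    by_contra! hcon
    exact hne (B.ray_inj x₀ γ α ⟨2 * δ, hcon⟩).symm
  obtain ⟨t0, ht0, hd⟩ := hdiv
  suffices hs : ∀ n : ℝ, 0 ≤ n → ∃ t : ℝ, 0 ≤ t ∧
      dist (B.ray (B.ray x₀ γ n) α t) x₀ ≤ t0 + δ + 1 by
    refine ⟨2 * (t0 + δ + 1), by positivity, fun n hn => ?_⟩
    obtain ⟨t, ht, hK⟩ := hs n hn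
    -- both `t` and `n` are, up to the bound, the distance from the origin of the ray to `x₀`
    have h1 := B.dist_start (B.ray x₀ γ n) α ht
    have h2 := B.dist_start x₀ γ hn
    have h3 := B.isRay (B.ray x₀ γ n) α n hn t ht
    have h4 : |n - t| ≤ t0 + δ + 1 := by
      rw [abs_le]
      constructor
      · linarith [dist_triangle (B.ray x₀ γ n) x₀ (B.ray (B.ray x₀ γ n) α t),
          dist_comm (B.ray x₀ γ n) x₀, dist_comm x₀ (B.ray (B.ray x₀ γ n) α t)]
      · linarith [dist_triangle (B.ray x₀ γ n) (B.ray (B.ray x₀ γ n) α t) x₀,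
          dist_comm (B.ray x₀ γ n) x₀]
    linarith [dist_triangle (B.ray (B.ray x₀ γ n) α n) (B.ray (B.ray x₀ γ n) α t) x₀]
  intro n hn
  rcases lt_or_ge n t0 with hlt | hge
  · refine ⟨0, le_rfl, ?_⟩
    rw [B.ray_start, dist_comm, B.dist_start _ _ hn]
    linarith
  set y := B.ray x₀ γ n with hy
  -- `m` is large enough for `[y, z]` and the ray from `y` to `α` to be `1`-close near `x₀`
  set m : ℝ := n + 1 + n * (n + t0 + δ) with hm
  have hP : 0 ≤ n * (n + t0 + δ) := by positivity
  have hm0 : 0 ≤ m := by positivity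
  set z := B.ray x₀ α m with hz
  have dxy : dist x₀ y = n := B.dist_start x₀ γ hn
  have dxz : dist x₀ z = m := B.dist_start x₀ α hm0
  obtain ⟨σ, hσ⟩ := hCAT.1 y z
  have g1 := (B.isRay x₀ γ).seg hn
  have g3 := (B.isRay x₀ α).seg hm0
  rw [B.ray_start] at g1 g3
  obtain ⟨u, hu, hdu⟩ := hslim x₀ y z _ σ _ g1 hσ g3 t0 ⟨ht0, by rw [dxy]; exact hge⟩
  rcases hu with ⟨s, hs, rfl⟩ | ⟨s, hs, rfl⟩
  · set L := dist y z with hL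
    have hLm : m - n ≤ L := by linarith [dist_triangle x₀ y z]
    have hL0 : 0 < L := by linarith
    have hux : dist (σ s) x₀ ≤ t0 + δ := by
      have h1 := B.dist_start x₀ γ ht0
      linarith [dist_triangle (σ s) (B.ray x₀ γ t0) x₀, dist_comm (σ s) (B.ray x₀ γ t0),
        dist_comm x₀ (B.ray x₀ γ t0)]
    have hsb : s ≤ n + t0 + δ := by
      have h1 := hσ.2.2 0 ⟨le_rfl, dist_nonneg⟩ s hs
      rw [hσ.1, zero_sub, abs_neg, abs_of_nonneg hs.1] at h1
      linarith [dist_triangle y x₀ (σ s), dist_comm y x₀, dist_comm (σ s) x₀]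
    have gη := (B.isRay y α).seg hm0
    rw [B.ray_start] at gη
    have hl0 : 0 ≤ s / L := div_nonneg hs.1 hL0.le
    have hc := hCAT.conv hσ gη hl0 ((div_le_one hL0).2 hs.2)
    rw [← hL, div_mul_cancel₀ _ hL0.ne', B.dist_start y α hm0] at hc
    refine ⟨s / L * m, by positivity, ?_⟩
    have hbase : dist z (B.ray y α m) ≤ n := by
      rw [← dxy]
      exact B.change_base hCAT x₀ y α hm0
    have hsmall : s / L * dist z (B.ray y α m) ≤ 1 := by
      refine (mul_le_mul_of_nonneg_left hbase hl0).trans ?_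
      rw [div_mul_eq_mul_div, div_le_one hL0]
      nlinarith
    linarith [dist_triangle (B.ray y α (s / L * m)) (σ s) x₀,
      dist_comm (B.ray y α (s / L * m)) (σ s)]
  · exfalso
    have h1 := B.dist_start x₀ γ ht0
    have h2 := B.dist_start x₀ α hs.1
    have h3 := B.isRay x₀ α s hs.1 t0 ht0
    have h4 : |s - t0| ≤ δ := by
      rw [abs_le]
      constructor
      · linarith [dist_triangle x₀ (B.ray x₀ α s) (B.ray x₀ γ t0),
          dist_comm (B.ray x₀ γ t0) (B.ray x₀ α s)]
      · linarith [dist_triangle x₀ (B.ray x₀ γ t0) (B.ray x₀ α s)]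
    linarith [dist_triangle (B.ray x₀ γ t0) (B.ray x₀ α s) (B.ray x₀ α t0)]

/-- Passing from the basepoint `y` to `x₀` by an isometry `g` with `d(g y, x₀) ≤ R` moves each ray by
at most `R`. -/
theorem BoundaryStruct.translate (B : BoundaryStruct G X Bd) (hCAT : CAT0 X) (g : G)
    {x₀ y : X} {R : ℝ} (hR : dist (g • y) x₀ ≤ R) (α : Bd) {t : ℝ} (ht : 0 ≤ t) :
    dist (g • B.ray y α t) (B.ray x₀ (g • α) t) ≤ R := by
  rw [B.equivariant]
  exact (B.change_base hCAT _ _ _ ht).trans hR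

/-- Elements of `G` bringing back to `x₀` far away points of a fixed ray are infinitely many. -/
theorem BoundaryStruct.frequently_of_ray (B : BoundaryStruct G X Bd)
    (hiso : IsometricAction G X) {x₀ : X} {R : ℝ} (hR : ∀ y : X, ∃ g : G, dist y (g • x₀) ≤ R)
    (γ : Bd) (P : G → Prop) (N : ℝ)
    (hP : ∀ n : ℝ, 0 ≤ n → N ≤ n → ∀ g : G, dist (g • B.ray x₀ γ n) x₀ ≤ R → P g) :
    ∃ᶠ g in Filter.cofinite, P g := by
  rw [Filter.frequently_cofinite_iff_infinite]
  intro hfin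
  obtain ⟨M, hM⟩ := (hfin.image fun g : G => dist (g • x₀) x₀).bddAbove
  set n := max 0 (max N (M + R + 1)) with hn
  have hn0 : 0 ≤ n := le_max_left _ _
  have hnN : N ≤ n := (le_max_left _ _).trans (le_max_right _ _)
  have hnM : M + R + 1 ≤ n := (le_max_right _ _).trans (le_max_right _ _)
  obtain ⟨g, hg⟩ := hR (B.ray x₀ γ n)
  have hg' : dist (g⁻¹ • B.ray x₀ γ n) x₀ ≤ R := by
    rw [← hiso g, smul_inv_smul]
    exact hg
  have h1 : dist (g⁻¹ • x₀) x₀ ≤ M := hM ⟨g⁻¹, hP n hn0 hnN _ hg', rfl⟩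
  have h2 : dist (g⁻¹ • x₀) (g⁻¹ • B.ray x₀ γ n) = n := by
    rw [hiso, B.dist_start _ _ hn0]
  linarith [dist_triangle (g⁻¹ • x₀) x₀ (g⁻¹ • B.ray x₀ γ n),
    dist_comm (g⁻¹ • B.ray x₀ γ n) x₀]

/-- Seen from a far away point of the ray from `x₀` to `α`, the directions of `α` and `β` are
opposite: at a fixed time `i` the two rays are at distance at least `2 i - 1`. -/
theorem BoundaryStruct.separated (B : BoundaryStruct G X Bd) (hCAT : CAT0 X)
    (hhyp : HyperbolicSpace X) (x₀ : X) {α β : Bd} (hne : α ≠ β) {i : ℝ} (hi : 0 ≤ i) :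
    ∃ N : ℝ, ∀ n : ℝ, 0 ≤ n → N ≤ n →
      2 * i - 1 ≤ dist (B.ray (B.ray x₀ α n) α i) (B.ray (B.ray x₀ α n) β i) := by
  obtain ⟨K, hK0, hK⟩ := B.key_near hCAT hhyp x₀ hne.symm
  refine ⟨i * K + i + 1, fun n hn hNn => ?_⟩
  have hiK : 0 ≤ i * K := by positivity
  have hn0 : 0 < n := by linarith
  have hin : i ≤ n := by linarith
  set y := B.ray x₀ α n with hy
  have g1 := ((B.isRay x₀ α).seg hn).rev
  rw [(B.isRay x₀ α).dist_zero hn, B.ray_start] at g1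
  have g2 := (B.isRay y β).seg hn
  rw [B.ray_start] at g2
  have hc := hCAT.conv g1 g2 (l := i / n) (by positivity) ((div_le_one hn0).2 hin)
  rw [dist_comm y x₀, B.dist_start x₀ α hn, B.dist_start y β hn, div_mul_cancel₀ _ hn0.ne'] at hc
  have hsmall : i / n * dist x₀ (B.ray y β n) ≤ 1 := by
    have h1 := hK n hn
    rw [dist_comm] at h1
    refine (mul_le_mul_of_nonneg_left h1 (by positivity)).trans ?_
    rw [div_mul_eq_mul_div, div_le_one hn0]
    linarith
  have h2 := B.isRay x₀ α (n + i) (by simp only [Set.mem_Ici]; linarith) (n - i)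
    (by simp only [Set.mem_Ici]; linarith)
  rw [show n + i - (n - i) = 2 * i by ring, abs_of_nonneg (by linarith)] at h2
  rw [B.ray_tail hCAT x₀ α hn hi]
  linarith [dist_triangle (B.ray x₀ α (n + i)) (B.ray y β i) (B.ray x₀ α (n - i)),
    dist_comm (B.ray y β i) (B.ray x₀ α (n - i))]

/-! ### The metric on the boundary -/

theorem summable_half_pow : Summable fun i : ℕ => (1 : ℝ) / 2 ^ (i + 1) := by
  have := summable_geometric_two.mul_right (1 / 2 : ℝ)
  refine this.congr fun i => ?_
  rw [pow_succ, one_div_pow]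
  ring

theorem summable_min (a : ℕ → ℝ) (ha : ∀ i, 0 ≤ a i) :
    Summable fun i : ℕ => min (a i) ((1 : ℝ) / 2 ^ (i + 1)) :=
  Summable.of_nonneg_of_le (fun i => le_min (ha i) (by positivity)) (fun _ => min_le_right _ _)
    summable_half_pow

theorem bdist_nonneg (B : BoundaryStruct G X Bd) (x₀ : X) (α β : Bd) : 0 ≤ bdist B x₀ α β :=
  tsum_nonneg fun _ => le_min dist_nonneg (by positivity)

theorem bdist_le (B : BoundaryStruct G X Bd) (x₀ : X) (α β : Bd) :
    bdist B x₀ α β ≤ ∑' i : ℕ, (1 : ℝ) / 2 ^ (i + 1) :=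
  (summable_min _ fun _ => dist_nonneg).tsum_le_tsum (fun _ => min_le_right _ _) summable_half_pow

theorem le_bdist (B : BoundaryStruct G X Bd) (x₀ : X) (α β : Bd) (i : ℕ)
    (h : 1 ≤ dist (B.ray x₀ α (i + 1)) (B.ray x₀ β (i + 1))) :
    (1 : ℝ) / 2 ^ (i + 1) ≤ bdist B x₀ α β := by
  have h1 := (summable_min (fun i : ℕ => dist (B.ray x₀ α (i + 1)) (B.ray x₀ β (i + 1)))
    fun _ => dist_nonneg).le_tsum i fun j _ => le_min dist_nonneg (by positivity)
  refine le_trans (le_min (le_trans ?_ h) le_rfl) h1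
  rw [div_le_one (by positivity)]
  exact one_le_pow₀ (by norm_num)

/-- The sum in `bdist` is small as soon as finitely many distances are small. -/
theorem exists_small_tsum (ε : ℝ) (hε : 0 < ε) : ∃ N : ℕ, ∃ η > (0 : ℝ), ∀ a : ℕ → ℝ,
    (∀ i, 0 ≤ a i) → (∀ i < N, a i ≤ η) → ∑' i : ℕ, min (a i) ((1 : ℝ) / 2 ^ (i + 1)) ≤ ε := by
  have ht := tendsto_sum_nat_add fun i : ℕ => (1 : ℝ) / 2 ^ (i + 1)
  obtain ⟨N, hN⟩ := (ht.eventually (gt_mem_nhds (half_pos hε))).exists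
  refine ⟨N, ε / (2 * (N + 1)), by positivity, fun a ha0 ha => ?_⟩
  rw [← (summable_min a ha0).sum_add_tsum_nat_add N]
  have h1 : ∑ i ∈ Finset.range N, min (a i) ((1 : ℝ) / 2 ^ (i + 1)) ≤ ε / 2 := by
    have : ∑ i ∈ Finset.range N, min (a i) ((1 : ℝ) / 2 ^ (i + 1)) ≤
        ∑ _i ∈ Finset.range N, ε / (2 * ((N : ℝ) + 1)) :=
      Finset.sum_le_sum fun i hi => (min_le_left _ _).trans (ha i (Finset.mem_range.1 hi))
    refine this.trans ?_
    rw [Finset.sum_const, Finset.card_range, nsmul_eq_mul, ← mul_div_assoc,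
      div_le_div_iff₀ (by positivity) (by norm_num)]
    nlinarith
  have h2 : ∑' i : ℕ, min (a (i + N)) ((1 : ℝ) / 2 ^ (i + N + 1)) ≤
      ∑' i : ℕ, (1 : ℝ) / 2 ^ (i + N + 1) :=
    ((summable_nat_add_iff N).2 (summable_min a ha0)).tsum_le_tsum (fun _ => min_le_right _ _)
      ((summable_nat_add_iff N).2 summable_half_pow)
  linarith

/-! ### Separation and proximality under the group action -/

/-- If `R` is a codiameter of the orbit of `x₀` and `2 R ≤ j`, then `1 / 2 ^ (j + 1)` separates
infinitely many translates of any pair: `2 (j + 1) - 1 - 2 R ≥ 1`. -/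
theorem BoundaryStruct.frequently_far (B : BoundaryStruct G X Bd) (hCAT : CAT0 X)
    (hhyp : HyperbolicSpace X) (hiso : IsometricAction G X) {x₀ : X} {R : ℝ}
    (hR : ∀ y : X, ∃ g : G, dist y (g • x₀) ≤ R) {j : ℕ} (hj : 2 * R ≤ j) {α β : Bd}
    (hne : α ≠ β) :
    ∃ᶠ g : G in Filter.cofinite, (1 : ℝ) / 2 ^ (j + 1) ≤ bdist B x₀ (g • α) (g • β) := by
  have hj0 : (0 : ℝ) ≤ j := j.cast_nonneg
  have hi : (0 : ℝ) ≤ j + 1 := by positivity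
  obtain ⟨N, hN⟩ := B.separated hCAT hhyp x₀ hne hi
  refine B.frequently_of_ray hiso hR α _ N fun n hn hNn g hg => le_bdist B x₀ _ _ j ?_
  have h1 := hN n hn hNn
  rw [← hiso g] at h1
  have h2 := B.translate hCAT g hg α hi
  have h3 := B.translate hCAT g hg β hi
  have h4 := dist_triangle4 (g • B.ray (B.ray x₀ α n) α (j + 1)) (B.ray x₀ (g • α) (j + 1))
    (B.ray x₀ (g • β) (j + 1)) (g • B.ray (B.ray x₀ α n) β (j + 1))
  rw [dist_comm (B.ray x₀ (g • β) (j + 1))] at h4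
  linarith

/-- Infinitely many elements of `G` contract a pair `α`, `β`: those which bring back to `x₀` the far
away points of a ray towards a third boundary point `γ`. -/
theorem BoundaryStruct.frequently_near (B : BoundaryStruct G X Bd) (hCAT : CAT0 X)
    (hhyp : HyperbolicSpace X) (hiso : IsometricAction G X) {x₀ : X} {R : ℝ} (hR0 : 0 < R)
    (hR : ∀ y : X, ∃ g : G, dist y (g • x₀) ≤ R) {α β γ : Bd}
    (hα : α ≠ γ) (hβ : β ≠ γ) {ε : ℝ} (hε : 0 < ε) :
    ∃ᶠ g : G in Filter.cofinite, bdist B x₀ (g • α) (g • β) ≤ ε := by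
  obtain ⟨K, hK0, hK⟩ := B.key_near hCAT hhyp x₀ hα
  obtain ⟨K', hK0', hK'⟩ := B.key_near hCAT hhyp x₀ hβ
  obtain ⟨M, η, hη, hM⟩ := exists_small_tsum ε hε
  -- at time `n` the two translated rays are at distance at most `C`
  set C := K + K' + 2 * R with hC
  have hC0 : 0 < C := by positivity
  refine B.frequently_of_ray hiso hR γ _ (M + 1 + M * C / η) fun n hn hNn g hg =>
    hM _ (fun _ => dist_nonneg) fun i hi => ?_
  have hMC : 0 ≤ M * C / η := by positivity
  have hM0 : (0 : ℝ) ≤ M := M.cast_nonneg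
  have hn0 : 0 < n := by linarith
  have hiM : (i : ℝ) + 1 ≤ M := by exact_mod_cast hi
  have hfar : dist (B.ray x₀ (g • α) n) (B.ray x₀ (g • β) n) ≤ C := by
    have h1 := B.translate hCAT g hg α hn
    have h2 := B.translate hCAT g hg β hn
    have h3 := hK n hn
    have h4 := hK' n hn
    have h5 := dist_triangle_right (B.ray (B.ray x₀ γ n) α n) (B.ray (B.ray x₀ γ n) β n) x₀
    rw [← hiso g] at h5
    have h6 := dist_triangle4 (B.ray x₀ (g • α) n) (g • B.ray (B.ray x₀ γ n) α n)
      (g • B.ray (B.ray x₀ γ n) β n) (B.ray x₀ (g • β) n)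
    rw [dist_comm (B.ray x₀ (g • α) n) (g • B.ray (B.ray x₀ γ n) α n)] at h6
    linarith
  have hc := hCAT.ray_conv (B.isRay x₀ (g • α)) (B.isRay x₀ (g • β))
    (by rw [B.ray_start, B.ray_start]) (s := i + 1) (t := n) (by positivity) (by linarith) hn0
  refine hc.trans ((mul_le_mul_of_nonneg_left hfar (by positivity)).trans ?_)
  rw [div_mul_eq_mul_div, div_le_iff₀ hn0]
  have h7 : η * (M * C / η) = M * C := by field_simp
  nlinarith

end

/-- Theorem 4.2 / Theorem 1.2. If a group `G` acts geometrically on a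
hyperbolic CAT(0) space `X` with basepoint `x₀` and `|∂X| > 2`, then `∂X` is a scrambled
set; moreover there is a constant `c > 0`, independent of the pair of boundary points,
with `limsup { d_{∂X}(gα, gβ) : g ∈ G } > c` for all `α ≠ β` in `∂X`. -/
theorem scrambled_of_hyperbolic {G X Bd : Type*} [Group G] [MetricSpace X]
    [MulAction G X] [MulAction G Bd]
    (hCAT : CAT0 X) (hgeo : GeometricAction G X)
    (B : BoundaryStruct G X Bd) (x₀ : X) (hcard : MoreThanTwo Bd)
    (hhyp : HyperbolicSpace X) :
    IsScrambled B x₀ ∧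
      ∃ c > (0 : ℝ), ∀ α β : Bd, α ≠ β →
        c < Filter.limsup (fun g : G => bdist B x₀ (g • α) (g • β)) Filter.cofinite := by
  obtain ⟨hiso, -, hcc⟩ := hgeo
  obtain ⟨R, hR0, hR⟩ := hcc x₀
  obtain ⟨j, hj⟩ := exists_nat_ge (2 * R)
  have hbdd : ∀ α β : Bd, Filter.IsBoundedUnder (· ≤ ·) Filter.cofinite
      (fun g : G => bdist B x₀ (g • α) (g • β)) := fun α β =>
    Filter.isBoundedUnder_of ⟨_, fun g => bdist_le B x₀ (g • α) (g • β)⟩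
  have hbdd' : ∀ α β : Bd, Filter.IsBoundedUnder (· ≥ ·) Filter.cofinite
      (fun g : G => bdist B x₀ (g • α) (g • β)) := fun α β =>
    Filter.isBoundedUnder_of ⟨0, fun g => bdist_nonneg B x₀ (g • α) (g • β)⟩
  have hsup : ∀ α β : Bd, α ≠ β → (1 : ℝ) / 2 ^ (j + 1) ≤
      Filter.limsup (fun g : G => bdist B x₀ (g • α) (g • β)) Filter.cofinite := fun α β hne =>
    Filter.le_limsup_of_frequently_le (B.frequently_far hCAT hhyp hiso hR hj hne) (hbdd α β)
  have hpos : (0 : ℝ) < 1 / 2 ^ (j + 1) := by positivity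
  refine ⟨fun α β hne => ⟨hpos.trans_le (hsup α β hne), ?_⟩,
    1 / 2 ^ (j + 1) / 2, half_pos hpos, fun α β hne =>
      (half_lt_self hpos).trans_le (hsup α β hne)⟩
  have hthird : ∃ γ : Bd, α ≠ γ ∧ β ≠ γ := by
    obtain ⟨a, b, c, hab, hac, hbc⟩ := hcard
    by_contra! hcon
    have hor : ∀ x : Bd, x = α ∨ x = β := fun x =>
      (eq_or_ne α x).imp Eq.symm fun h => (hcon x h).symm
    rcases hor a with rfl | rfl <;> rcases hor b with rfl | rfl <;>
      rcases hor c with rfl | rfl <;> contradiction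
  obtain ⟨γ, hα, hβ⟩ := hthird
  have : (Filter.cofinite : Filter G).NeBot :=
    (Filter.frequently_true_iff_neBot _).1
      ((B.frequently_far hCAT hhyp hiso hR hj hne).mono fun _ _ => trivial)
  refine le_antisymm (le_of_forall_pos_le_add fun ε hε => ?_) ?_
  · rw [zero_add]
    exact Filter.liminf_le_of_frequently_le (B.frequently_near hCAT hhyp hiso hR0 hR hα hβ hε)
      (hbdd' α β)
  · exact Filter.le_liminf_of_le (hbdd α β).isCoboundedUnder_ge
      (Filter.Eventually.of_forall fun g => bdist_nonneg B x₀ (g • α) (g • β))
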